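/- Let $(G,c,o)$ be a rooted network: a connected, locally finite graph $G=(V,E)$ with conductances $c:E\to(0,\infty)$ and a distinguished vertex $o$; write $c_v=\sum_{z\sim v}c_{vz}$ for $v\in V$. Let $h:V\to[0,\infty)$ be a potential on it, that is, $h(o)=0$, $\Delta h(o)=1$ and $\Delta h(v)=0$ for all $v\ne o$, where $\Delta f(v)=\sum_{x\sim v}c_{vx}\,(f(x)-f(v))$. If $x\neq o$ and $x_0=o,x_1,\dots,x_\ell=x$ is a simple path from $o$ to $x$, then $$h(x)\;\le\;\prod_{i=1}^{\ell}c_{x_{i-1}x_i}^{-1}\cdot\prod_{i=1}^{\ell-1}c_{x_i}.$$ -/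

import Mathlib

/-- A rooted network: a connected, locally finite graph with positive symmetric edge
conductances (extended by `0` to pairs that are not edges) and a distinguished vertex `o`. -/
structure RootedNetwork (V : Type*) where
  G : SimpleGraph V
  locallyFinite : ∀ x : V, (G.neighborSet x).Finite
  connected : G.Connected
  c : V → V → ℝ
  c_symm : ∀ x y, c x y = c y x
  c_pos : ∀ x y, G.Adj x y → 0 < c x y
  c_eq_zero : ∀ x y, ¬ G.Adj x y → c x y = 0
  o : V

namespace RootedNetwork

/-- The finite set of neighbours of `v`. -/
noncomputable def nbrs {V : Type*} (N : RootedNetwork V) (v : V) : Finset V :=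
  (N.locallyFinite v).toFinset

/-- The vertex weight `c_v = Σ_{z ∼ v} c_{vz}`. -/
noncomputable def cv {V : Type*} (N : RootedNetwork V) (v : V) : ℝ :=
  ∑ z ∈ N.nbrs v, N.c v z

/-- The network Laplacian `Δ f (v) = Σ_{x ∼ v} c_{vx} (f(x) - f(v))`. -/
noncomputable def lap {V : Type*} (N : RootedNetwork V) (f : V → ℝ) (v : V) : ℝ :=
  ∑ x ∈ N.nbrs v, N.c v x * (f x - f v)

/-- A potential: a nonnegative function vanishing at `o`, with Laplacian `1`
at `o`, harmonic everywhere else. -/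
def IsPotential {V : Type*} (N : RootedNetwork V) (h : V → ℝ) : Prop :=
  (∀ v, 0 ≤ h v) ∧ h N.o = 0 ∧ N.lap h N.o = 1 ∧ ∀ v, v ≠ N.o → N.lap h v = 0

/-- For a walk `x_0, x_1, …, x_ℓ`, the number
`(∏_{i=1}^{ℓ} c_{x_{i-1} x_i}⁻¹) * ∏_{i=1}^{ℓ-1} c_{x_i}`. For `ℓ ≥ 1` it is the inverse of the
stationary weight `c_{x_0} p(x_0,x_1) ⋯ p(x_{ℓ-1},x_ℓ)` of the walk, `p(x,y) = c_{xy} / c_x`. -/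
noncomputable def pathWeightInv {V : Type*} (N : RootedNetwork V) {x y : V}
    (w : N.G.Walk x y) : ℝ :=
  (∏ i ∈ Finset.Icc 1 w.length, (N.c (w.getVert (i - 1)) (w.getVert i))⁻¹) *
    ∏ i ∈ Finset.Ico 1 w.length, N.cv (w.getVert i)

end RootedNetwork

/-!
All terms of `∑ y ∈ N.nbrs v, N.c v y * f y = N.lap f v + N.cv v * f v` are nonnegative when `f` is,
so each of them is at most the whole sum. At a vertex where `f` is superharmonic the sum is at most
`N.cv v * f v`, and chaining these one-edge bounds along a walk gives a Harnack-type inequality.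
For a potential the sum at the root is `1`, and a simple path never returns there.
-/

open SimpleGraph

section Walk

variable {V : Type*} {G : SimpleGraph V} {u v x : V}

theorem ne_start_of_mem_tail_support {p : G.Walk u x} (hp : p.IsPath)
    (hv : v ∈ p.support.tail) : v ≠ u := by
  have hnodup := hp.support_nodup
  rw [← p.cons_tail_support, List.nodup_cons] at hnodup
  exact ne_of_mem_of_not_mem hv hnodup.1

theorem dropLast_tail_support_cons (huv : G.Adj u v) {p : G.Walk v x} (hp : ¬p.Nil) :
    (p.cons huv).support.tail.dropLast = v :: p.support.tail.dropLast := by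
  rw [Walk.support_cons, List.tail_cons, ← p.cons_tail_support, List.tail_cons,
    List.dropLast_cons_of_ne_nil (List.ne_nil_of_mem (p.end_mem_tail_support hp))]

end Walk

namespace RootedNetwork

variable {V : Type*} (N : RootedNetwork V)

theorem mem_nbrs {v x : V} : x ∈ N.nbrs v ↔ N.G.Adj v x := by
  simp only [nbrs, Set.Finite.mem_toFinset, mem_neighborSet]

theorem c_nonneg (v x : V) : 0 ≤ N.c v x := by
  by_cases hvx : N.G.Adj v x
  · exact (N.c_pos v x hvx).le
  · exact (N.c_eq_zero v x hvx).ge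

theorem cv_nonneg (v : V) : 0 ≤ N.cv v :=
  Finset.sum_nonneg fun x _ => N.c_nonneg v x

theorem lap_add_cv_mul (f : V → ℝ) (v : V) :
    N.lap f v + N.cv v * f v = ∑ x ∈ N.nbrs v, N.c v x * f x := by
  simp only [lap, cv, mul_sub, Finset.sum_sub_distrib, Finset.sum_mul, sub_add_cancel]

theorem le_inv_c_mul_of_adj {f : V → ℝ} (hf : ∀ v, 0 ≤ f v) {v x : V} (hvx : N.G.Adj v x) :
    f x ≤ (N.c v x)⁻¹ * (N.lap f v + N.cv v * f v) := by
  rw [le_inv_mul_iff₀ (N.c_pos v x hvx), lap_add_cv_mul]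
  exact Finset.single_le_sum (f := fun y => N.c v y * f y)
    (fun y _ => mul_nonneg (N.c_nonneg v y) (hf y)) (N.mem_nbrs.2 hvx)

theorem pathWeightInv_nonneg {u x : V} (w : N.G.Walk u x) : 0 ≤ N.pathWeightInv w :=
  mul_nonneg (Finset.prod_nonneg fun _ _ => inv_nonneg.2 (N.c_nonneg _ _))
    (Finset.prod_nonneg fun _ _ => N.cv_nonneg _)

theorem pathWeightInv_toWalk {u v : V} (huv : N.G.Adj u v) :
    N.pathWeightInv huv.toWalk = (N.c u v)⁻¹ := by
  simp [pathWeightInv]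

theorem pathWeightInv_eq_prod_range {u x : V} (w : N.G.Walk u x) :
    N.pathWeightInv w =
      (∏ i ∈ Finset.range w.length, (N.c (w.getVert i) (w.getVert (i + 1)))⁻¹) *
        ∏ i ∈ Finset.range (w.length - 1), N.cv (w.getVert (i + 1)) := by
  simp only [pathWeightInv, ← Finset.Ico_add_one_right_eq_Icc, Finset.prod_Ico_eq_prod_range,
    Nat.add_sub_cancel, Nat.add_comm 1]

theorem pathWeightInv_cons {u v x : V} (huv : N.G.Adj u v) {w : N.G.Walk v x} (hw : ¬w.Nil) :
    N.pathWeightInv (w.cons huv) = N.pathWeightInv w * (N.cv v * (N.c u v)⁻¹) := by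
  obtain ⟨n, hn⟩ := Nat.exists_eq_add_one.2 (Walk.not_nil_iff_lt_length.1 hw)
  simp only [pathWeightInv_eq_prod_range, Walk.length_cons, hn, Nat.add_sub_cancel,
    Walk.getVert_cons_succ]
  rw [Finset.prod_range_succ', Finset.prod_range_succ' (fun i => N.cv (w.getVert i))]
  simp only [Walk.getVert_cons_succ, Walk.getVert_zero]
  ring

end RootedNetwork

theorem potential_le_pathWeightInv_general {V : Type*} (N : RootedNetwork V) {f : V → ℝ}
    (hf : ∀ v, 0 ≤ f v) {u x : V} (w : N.G.Walk u x) (hw : ¬w.Nil)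
    (hlap : ∀ v ∈ w.support.tail.dropLast, N.lap f v ≤ 0) :
    f x ≤ N.pathWeightInv w * (N.lap f u + N.cv u * f u) := by
  induction w with
  | nil => exact absurd .nil hw
  | @cons u v x huv p ih =>
    have hedge : f v ≤ (N.c u v)⁻¹ * (N.lap f u + N.cv u * f u) := N.le_inv_c_mul_of_adj hf huv
    by_cases hp : p.Nil
    · cases hp
      rwa [← N.pathWeightInv_toWalk huv] at hedge
    · rw [dropLast_tail_support_cons huv hp, List.forall_mem_cons] at hlap
      have hsuper : N.lap f v + N.cv v * f v ≤ N.cv v * f v := add_le_of_nonpos_left hlap.1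
      calc f x ≤ N.pathWeightInv p * (N.lap f v + N.cv v * f v) := ih hp hlap.2
        _ ≤ N.pathWeightInv p * (N.cv v * ((N.c u v)⁻¹ * (N.lap f u + N.cv u * f u))) :=
          mul_le_mul_of_nonneg_left
            (hsuper.trans (mul_le_mul_of_nonneg_left hedge (N.cv_nonneg v)))
            (N.pathWeightInv_nonneg p)
        _ = N.pathWeightInv (p.cons huv) * (N.lap f u + N.cv u * f u) := by
          rw [N.pathWeightInv_cons huv hp]
          ring

/-- For any potential `h` on a rooted network and any simple path
`o = x_0, x_1, …, x_ℓ = x` with `x ≠ o`, one has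
`h(x) ≤ (∏_{i=1}^ℓ c_{x_{i-1} x_i}⁻¹) * ∏_{i=1}^{ℓ-1} c_{x_i}`. -/
theorem potential_le_pathWeightInv {V : Type*} (N : RootedNetwork V)
    (h : V → ℝ) (hpot : N.IsPotential h) (x : V) (hx : x ≠ N.o)
    (w : N.G.Walk N.o x) (hw : w.IsPath) :
    h x ≤ N.pathWeightInv w := by
  simpa only [hpot.2.1, hpot.2.2.1, mul_zero, add_zero, mul_one] using
    potential_le_pathWeightInv_general N hpot.1 w (Walk.not_nil_of_ne hx.symm) fun v hv =>
      (hpot.2.2.2 v (ne_start_of_mem_tail_support hw (List.mem_of_mem_dropLast hv))).le
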